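/- arXiv:2208.13297 — 2 statements merged into one kernel-verified Lean document; each statement's English description precedes it below -/
import Mathlib

section
/- For every finite simple graph G, the semistrong chromatic index of G is at most Δ(G)^2, where Δ(G) denotes the maximum degree of G. -/
open SimpleGraph

variable {V : Type*}

/-- The set of endvertices of the edges in `M`. -/
def edgeVerts (M : Set (Sym2 V)) : Set V := {v | ∃ e ∈ M, v ∈ e}

/-- `M` is a matching of the simple graph `G`: a set of edges of `G`
that are pairwise disjoint. -/
def IsMatchingSet (G : SimpleGraph V) (M : Set (Sym2 V)) : Prop :=
  M ⊆ G.edgeSet ∧ ∀ e ∈ M, ∀ f ∈ M, e ≠ f → ∀ v : V, v ∈ e → v ∉ f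

/-- `M` is a semistrong matching of `G`: a matching such that every edge of `M`
has an endvertex of degree one in the subgraph of `G` induced by the
endvertices of the edges of `M`. -/
def IsSemistrongMatching (G : SimpleGraph V) (M : Set (Sym2 V)) : Prop :=
  IsMatchingSet G M ∧
    ∀ e ∈ M, ∃ u v : V, e = s(u, v) ∧ ∀ w ∈ edgeVerts M, G.Adj u w → w = v

/-- `G` has a semistrong edge-coloring with (at most) `k` colors: a proper
edge-coloring in which every color class is a semistrong matching. -/
def HasSemistrongEdgeColoring (G : SimpleGraph V) (k : ℕ) : Prop :=
  ∃ c : Sym2 V → ℕ, (∀ e ∈ G.edgeSet, c e < k) ∧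
    ∀ i : ℕ, IsSemistrongMatching G {e | e ∈ G.edgeSet ∧ c e = i}

/-- The semistrong chromatic index of `G`. -/
noncomputable def ssChromIdx (G : SimpleGraph V) : ℕ :=
  sInf {k | HasSemistrongEdgeColoring G k}

/-!
Give two edges `e ≠ f` as weight the number of adjacent pairs made of an end of `e` and an end of
`f`. For an edge `uv`, the neighbours of `u` have total degree at most `Δ ^ 2`, and so do those of
`v`, so `uv` has total weight less than `2 * Δ ^ 2`; the inequality is strict because the weight
of `uv` with itself, which is counted in these degree sums, is positive. Among all colourings of
the edges with `Δ ^ 2` colours take one whose monochromatic pairs have the least total weight.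
No edge can be improved by recolouring it, so by pigeonhole every edge `uv` has weight at most `1`
with the rest of its colour class: `u` or `v` is adjacent to no end of another edge of the class.
-/

section WeightedColoring

open Finset Function

variable {E κ R : Type*} [DecidableEq E]

section AddCommMonoid

variable [AddCommMonoid R]

lemma sum_offDiag_eq_two_nsmul_add {F : E → E → R} (hF : ∀ a b, F a b = F b a)
    {s : Finset E} {a : E} (ha : a ∈ s) :
    ∑ p ∈ s.offDiag, F p.1 p.2 =
      2 • ∑ b ∈ s.erase a, F a b + ∑ p ∈ (s.erase a).offDiag, F p.1 p.2 := by
  have hdisj : Disjoint ((s.erase a).offDiag ∪ {a} ×ˢ s.erase a) (s.erase a ×ˢ {a}) := by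
    rw [Finset.disjoint_left]
    grind
  have hdisj' : Disjoint (s.erase a).offDiag ({a} ×ˢ s.erase a) := by
    rw [Finset.disjoint_left]
    grind
  conv_lhs => rw [← insert_erase ha, offDiag_insert (notMem_erase a s), sum_union hdisj,
    sum_union hdisj', sum_product, sum_product, sum_singleton]
  simp only [sum_singleton, hF _ a]
  rw [two_nsmul, add_assoc, add_comm]

variable [Fintype E] [DecidableEq κ]

/-- The total weight `w a b` between `a` and the other elements `b` of colour `i`. The colour of
`a` itself plays no part, so this is what `a` would pay for the colour `i`. -/
def colorWeight (w : E → E → R) (c : E → κ) (a : E) (i : κ) : R :=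
  ∑ b ∈ univ.erase a with c b = i, w a b

/-- The total weight of the monochromatic pairs of a colouring, the potential to be minimised.
The pairs are ordered, so a symmetric weight is counted twice. -/
def monochromaticWeight (w : E → E → R) (c : E → κ) : R :=
  ∑ p ∈ univ.offDiag with c p.1 = c p.2, w p.1 p.2

lemma monochromaticWeight_update {w : E → E → R} (hw : ∀ a b, w a b = w b a)
    (c : E → κ) (a : E) (i : κ) :
    monochromaticWeight w (update c a i) =
      2 • colorWeight w c a i + ∑ p ∈ (univ.erase a).offDiag with c p.1 = c p.2, w p.1 p.2 := by
  have hsymm (a' b' : E) : (if update c a i a' = update c a i b' then w a' b' else 0) =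
      if update c a i b' = update c a i a' then w b' a' else 0 := by
    simp only [hw a' b', eq_comm]
  rw [monochromaticWeight, colorWeight, sum_filter, sum_filter, sum_filter,
    sum_offDiag_eq_two_nsmul_add hsymm (mem_univ a)]
  congr 1
  · refine congrArg (2 • ·) (sum_congr rfl fun b hb ↦ ?_)
    rw [update_self, update_of_ne (ne_of_mem_erase hb)]
    simp only [eq_comm]
  · refine sum_congr rfl fun p hp ↦ ?_
    obtain ⟨h₁, h₂, -⟩ := mem_offDiag.mp hp
    rw [update_of_ne (ne_of_mem_erase h₁), update_of_ne (ne_of_mem_erase h₂)]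

end AddCommMonoid

variable [Fintype E] [DecidableEq κ] [AddCommMonoid R] [LinearOrder R] [IsOrderedCancelAddMonoid R]

lemma colorWeight_le_of_monochromaticWeight_le_update {w : E → E → R}
    (hw : ∀ a b, w a b = w b a) {c : E → κ} {a : E} {i : κ}
    (h : monochromaticWeight w c ≤ monochromaticWeight w (update c a i)) :
    colorWeight w c a (c a) ≤ colorWeight w c a i := by
  rw [← update_eq_self a c, monochromaticWeight_update hw, update_eq_self,
    monochromaticWeight_update hw] at h
  exact le_of_nsmul_le_nsmul_right two_ne_zero (le_of_add_le_add_right h)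

/-- A weighted form of Lovász's theorem on vertex partitions into parts of small degree. -/
theorem exists_coloring_forall_colorWeight_lt [Fintype κ] [CanonicallyOrderedAdd R]
    {w : E → E → R} (hw : ∀ a b, w a b = w b a) {m : R}
    (hm : ∀ a, ∑ b ∈ univ.erase a, w a b < Fintype.card κ • m) :
    ∃ c : E → κ, ∀ a, colorWeight w c a (c a) < m := by
  have hκ (a : E) : Nonempty κ := by
    by_contra hempty
    rw [not_nonempty_iff] at hempty
    simpa using hm a
  have : Nonempty (E → κ) := ⟨fun a ↦ (hκ a).some⟩
  obtain ⟨c, hc⟩ := Finite.exists_min (monochromaticWeight w : (E → κ) → R)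
  refine ⟨c, fun a ↦ ?_⟩
  obtain ⟨i, -, hi⟩ : ∃ i ∈ univ, colorWeight w c a i < m :=
    exists_sum_fiber_lt_of_maps_to_of_sum_lt_nsmul (fun b _ ↦ mem_univ (c b)) (hm a)
  exact (colorWeight_le_of_monochromaticWeight_le_update hw (hc _)).trans_lt hi

end WeightedColoring

section SemistrongColoring

open Finset

variable {G : SimpleGraph V}

lemma isSemistrongMatching_of_forall_exists_end {M : Set (Sym2 V)} (hM : M ⊆ G.edgeSet)
    (h : ∀ e ∈ M, ∃ u ∈ e, ∀ f ∈ M, ∀ x ∈ f, G.Adj u x → e = f) :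
    IsSemistrongMatching G M := by
  refine ⟨⟨hM, fun e he f hf hne y hye hyf ↦ hne ?_⟩, fun e he ↦ ?_⟩
  · obtain ⟨u, hu, hpriv⟩ := h e he
    obtain ⟨v, rfl⟩ := Sym2.mem_iff_exists.mp hu
    obtain rfl | rfl := Sym2.mem_iff.mp hye
    · obtain ⟨x, rfl⟩ := Sym2.mem_iff_exists.mp hyf
      exact hpriv _ hf x (Sym2.mem_mk_right _ _) (hM hf)
    · exact hpriv f hf _ hyf (hM he)
  · obtain ⟨u, hu, hpriv⟩ := h e he
    obtain ⟨v, rfl⟩ := Sym2.mem_iff_exists.mp hu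
    refine ⟨u, v, rfl, fun x ⟨f, hf, hxf⟩ hux ↦ ?_⟩
    rw [← hpriv f hf x hxf hux] at hxf
    exact (Sym2.mem_iff.mp hxf).resolve_left hux.ne'

lemma hasSemistrongEdgeColoring_of_forall_exists_end {k : ℕ} (c : G.edgeSet → Fin k)
    (h : ∀ e, ∃ u ∈ e.1, ∀ f, c f = c e → ∀ x ∈ f.1, G.Adj u x → e = f) :
    HasSemistrongEdgeColoring G k := by
  let c' : Sym2 V → ℕ := Function.extend Subtype.val (fun e ↦ (c e : ℕ)) 0
  have hc' (e : G.edgeSet) : c' e = c e := Subtype.val_injective.extend_apply _ _ e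
  refine ⟨c', fun e he ↦ (hc' ⟨e, he⟩).trans_lt (c ⟨e, he⟩).isLt, fun i ↦
    isSemistrongMatching_of_forall_exists_end (fun e he ↦ he.1) ?_⟩
  rintro e ⟨he, rfl⟩
  obtain ⟨u, hu, hpriv⟩ := h ⟨e, he⟩
  refine ⟨u, hu, fun f ⟨hf, hfe⟩ x hx hux ↦ ?_⟩
  rw [hc' ⟨f, hf⟩, hc' ⟨e, he⟩] at hfe
  exact congrArg Subtype.val (hpriv ⟨f, hf⟩ (Fin.ext hfe) x hx hux)

section EdgeWeight

variable [DecidableEq V] [DecidableRel G.Adj]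

lemma card_interedges_toFinset_mk {u v : V} (huv : u ≠ v) (t : Finset V) :
    #(G.interedges s(u, v).toFinset t) = #{x ∈ t | G.Adj u x} + #{x ∈ t | G.Adj v x} := by
  rw [Sym2.toFinset_mk_eq, SimpleGraph.interedges, Rel.interedges, card_filter, sum_product,
    sum_pair huv]
  simp only [card_filter]

lemma exists_end_of_sum_card_interedges_lt_two {e : Sym2 V} (he : e ∈ G.edgeSet)
    {s : Finset G.edgeSet} (h : ∑ f ∈ s, #(G.interedges e.toFinset f.1.toFinset) < 2) :
    ∃ u ∈ e, ∀ f ∈ s, ∀ x ∈ f.1, ¬ G.Adj u x := by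
  induction e with | _ u v
  simp only [card_interedges_toFinset_mk he.ne, sum_add_distrib] at h
  have hzero : ∑ f ∈ s, #{x ∈ f.1.toFinset | G.Adj u x} = 0 ∨
      ∑ f ∈ s, #{x ∈ f.1.toFinset | G.Adj v x} = 0 := by lia
  simp only [sum_eq_zero_iff, card_eq_zero, filter_eq_empty_iff, Sym2.mem_toFinset] at hzero
  rcases hzero with hu | hv
  · exact ⟨u, Sym2.mem_mk_left u v, hu⟩
  · exact ⟨v, Sym2.mem_mk_right u v, hv⟩

variable [Fintype G.edgeSet] [G.LocallyFinite]

variable (G) in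
lemma sum_card_filter_adj_eq_sum_degree (u : V) :
    ∑ e : G.edgeSet, #{x ∈ e.1.toFinset | G.Adj u x} =
      ∑ x ∈ G.neighborFinset u, G.degree x := by
  calc ∑ e : G.edgeSet, #{x ∈ e.1.toFinset | G.Adj u x}
    _ = ∑ e ∈ G.edgeFinset, #{x ∈ e.toFinset | G.Adj u x} :=
      (sum_subtype _ (fun _ ↦ mem_edgeFinset) fun e ↦ #{x ∈ e.toFinset | G.Adj u x}).symm
    _ = ∑ e ∈ G.edgeFinset, #{x ∈ G.neighborFinset u | x ∈ e} := by
      refine sum_congr rfl fun e _ ↦ congrArg card ?_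
      ext x
      simp [and_comm]
    _ = ∑ x ∈ G.neighborFinset u, #{e ∈ G.edgeFinset | x ∈ e} :=
      sum_card_bipartiteAbove_eq_sum_card_bipartiteBelow fun e x ↦ x ∈ e
    _ = ∑ x ∈ G.neighborFinset u, G.degree x := by
      simp only [← G.incidenceFinset_eq_filter, card_incidenceFinset_eq_degree]

lemma sum_erase_card_interedges_lt {u v : V} (huv : G.Adj u v) :
    ∑ f ∈ univ.erase (⟨s(u, v), huv⟩ : G.edgeSet), #(G.interedges s(u, v).toFinset f.1.toFinset) <
      ∑ x ∈ G.neighborFinset u, G.degree x + ∑ x ∈ G.neighborFinset v, G.degree x := by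
  have hself : 0 < #(G.interedges s(u, v).toFinset s(u, v).toFinset) :=
    card_pos.mpr ⟨(u, v), by simp [mem_interedges_iff, huv]⟩
  calc ∑ f ∈ univ.erase (⟨s(u, v), huv⟩ : G.edgeSet), #(G.interedges s(u, v).toFinset f.1.toFinset)
    _ < ∑ f : G.edgeSet, #(G.interedges s(u, v).toFinset f.1.toFinset) :=
      sum_lt_sum_of_subset (erase_subset _ _) (mem_univ _) (notMem_erase _ _) hself
        fun _ _ _ ↦ Nat.zero_le _
    _ = ∑ x ∈ G.neighborFinset u, G.degree x + ∑ x ∈ G.neighborFinset v, G.degree x := by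
      simp only [card_interedges_toFinset_mk huv.ne, sum_add_distrib,
        sum_card_filter_adj_eq_sum_degree]

end EdgeWeight

theorem ssChromIdx_le_maxDegree_sq_general [Finite G.edgeSet] [G.LocallyFinite] {k : ℕ}
    (hk : ∀ u v, G.Adj u v →
      ∑ x ∈ G.neighborFinset u, G.degree x + ∑ x ∈ G.neighborFinset v, G.degree x ≤ 2 * k) :
    HasSemistrongEdgeColoring G k := by
  classical
  have := Fintype.ofFinite G.edgeSet
  have := G.symm
  let w (e f : G.edgeSet) : ℕ := #(G.interedges e.1.toFinset f.1.toFinset)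
  have hw (e f : G.edgeSet) : w e f = w f e := Rel.card_interedges_comm _ _
  have hlt (e : G.edgeSet) : ∑ f ∈ univ.erase e, w e f < Fintype.card (Fin k) • 2 := by
    obtain ⟨⟨u, v⟩, huv⟩ := e
    rw [Fintype.card_fin, smul_eq_mul, mul_comm]
    exact (sum_erase_card_interedges_lt huv).trans_le (hk u v huv)
  obtain ⟨c, hc⟩ := exists_coloring_forall_colorWeight_lt hw hlt
  refine hasSemistrongEdgeColoring_of_forall_exists_end c fun e ↦ ?_
  obtain ⟨u, hu, hnadj⟩ := exists_end_of_sum_card_interedges_lt_two e.2 (hc e)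
  refine ⟨u, hu, fun f hfe x hx hux ↦ by_contra fun hef ↦ ?_⟩
  exact hnadj f (by simp [Ne.symm hef, hfe]) x hx hux

lemma sum_degree_neighborFinset_le [Fintype V] [DecidableRel G.Adj] (u : V) :
    ∑ x ∈ G.neighborFinset u, G.degree x ≤ G.maxDegree ^ 2 := by
  calc ∑ x ∈ G.neighborFinset u, G.degree x
    _ ≤ G.degree u * G.maxDegree := sum_le_card_nsmul _ _ _ fun x _ ↦ G.degree_le_maxDegree x
    _ ≤ G.maxDegree ^ 2 := by
      rw [sq]
      exact Nat.mul_le_mul_right _ (G.degree_le_maxDegree u)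

end SemistrongColoring

/-- For every finite simple graph `G`, the semistrong chromatic index of `G`
is at most `Δ(G)^2`. -/
theorem ssChromIdx_le_maxDegree_sq {V : Type*} [Fintype V] [DecidableEq V]
    (G : SimpleGraph V) [DecidableRel G.Adj] :
    ssChromIdx G ≤ G.maxDegree ^ 2 := by
  refine Nat.sInf_le (ssChromIdx_le_maxDegree_sq_general fun u v _ ↦ ?_)
  grw [sum_degree_neighborFinset_le u, sum_degree_neighborFinset_le v, two_mul]
end

section
/- If G is a finite simple graph with maximum degree Δ(G) in which no edge has both of its endvertices of degree Δ(G), then the semistrong chromatic index of G is at most Δ(G)^2 − 1. -/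
open SimpleGraph

variable {V : Type*}

/-!
Color as many edges as possible with `k` colors, every color class being a semistrong matching,
and among these partial colorings take one with as few pairs of edges of equal color joined by an
edge as possible. Suppose that `uv` is left uncolored and charge, for each color `α`, one unit to
each neighbor of `u` or `v` covered by `α`, and one more if the edge to that neighbor itself has
color `α`. A neighbor `w` pays at most `deg w + 1` in total. On the other hand each color is charged
at least twice: otherwise `α` avoids `u` and `v`, and at most one edge `by` of color `α` is seen
from `uv`, through a single adjacency `vb`, say. Either `uv` can take color `α`, or `y` has a
further neighbor covered by `α`, and then recoloring `uv` with `α` and uncoloring `by` removes a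
joined pair. The total charge at `uv` is at most `(deg u + deg v - 2)(Δ + 1)`, which is less than
`2(Δ² - 1)` unless `deg u = deg v = Δ`.
-/

/-- The set of edges of `G` that the map `c` sends to the color `i`. -/
def colorClass (G : SimpleGraph V) (c : Sym2 V → ℕ) (i : ℕ) : Set (Sym2 V) :=
  {e | e ∈ G.edgeSet ∧ c e = i}

/-- Among the endvertices of the edges in `M`, the vertex `p` has no neighbor other than `q`. When
`s(p, q) ∈ M` this says that `p` has degree one in the induced subgraph, but `p` itself need not be
covered by `M`. -/
def OnlyNeighborIn (G : SimpleGraph V) (M : Set (Sym2 V)) (p q : V) : Prop :=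
  ∀ w ∈ edgeVerts M, G.Adj p w → w = q

/-- Some edge of `G` joins an endvertex of `e` to an endvertex of `f`; for distinct edges of a
matching this is the failure of the matching to be induced. -/
def Touching (G : SimpleGraph V) (e f : Sym2 V) : Prop :=
  ∃ a ∈ e, ∃ b ∈ f, G.Adj a b

section Matching

variable {G : SimpleGraph V} {M N : Set (Sym2 V)} {e f : Sym2 V} {u v w b y : V}

theorem Touching.symm (h : Touching G e f) : Touching G f e := by
  obtain ⟨a, ha, b, hb, hab⟩ := h
  exact ⟨b, hb, a, ha, hab.symm⟩

theorem edgeVerts_mono (h : M ⊆ N) : edgeVerts M ⊆ edgeVerts N :=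
  fun _ ⟨e, he, hv⟩ => ⟨e, h he, hv⟩

theorem left_mem_edgeVerts (h : s(u, v) ∈ M) : u ∈ edgeVerts M :=
  ⟨_, h, Sym2.mem_mk_left u v⟩

theorem right_mem_edgeVerts (h : s(u, v) ∈ M) : v ∈ edgeVerts M :=
  ⟨_, h, Sym2.mem_mk_right u v⟩

theorem exists_mk_mem_of_mem_edgeVerts (h : v ∈ edgeVerts M) : ∃ w, s(v, w) ∈ M := by
  obtain ⟨e, he, hv⟩ := h
  obtain ⟨w, rfl⟩ := hv
  exact ⟨w, he⟩

theorem mem_edgeVerts_insert :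
    w ∈ edgeVerts (insert s(u, v) M) ↔ w = u ∨ w = v ∨ w ∈ edgeVerts M := by
  simp [edgeVerts, or_assoc]

theorem OnlyNeighborIn.mono {p q : V} (h : OnlyNeighborIn G N p q) (hMN : M ⊆ N) :
    OnlyNeighborIn G M p q :=
  fun w hw => h w (edgeVerts_mono hMN hw)

theorem IsMatchingSet.subset (hN : IsMatchingSet G N) (hMN : M ⊆ N) : IsMatchingSet G M :=
  ⟨hMN.trans hN.1, fun e he f hf => hN.2 e (hMN he) f (hMN hf)⟩

theorem IsMatchingSet.eq_of_mem (hM : IsMatchingSet G M) (he : e ∈ M) (hf : f ∈ M)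
    (hve : v ∈ e) (hvf : v ∈ f) : e = f :=
  by_contra fun hne => hM.2 e he f hf hne v hve hvf

theorem IsMatchingSet.insert_edge (hM : IsMatchingSet G M) (huv : G.Adj u v)
    (hu : u ∉ edgeVerts M) (hv : v ∉ edgeVerts M) : IsMatchingSet G (insert s(u, v) M) := by
  have disjoint_new : ∀ f ∈ M, ∀ x ∈ s(u, v), x ∉ f := by
    intro f hf x hx hxf
    rcases Sym2.mem_iff.1 hx with rfl | rfl
    · exact hu ⟨f, hf, hxf⟩
    · exact hv ⟨f, hf, hxf⟩
  refine ⟨Set.insert_subset huv hM.1, ?_⟩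
  rintro e (rfl | he) f (rfl | hf) hne x hxe hxf
  · exact hne rfl
  · exact disjoint_new f hf x hxe hxf
  · exact disjoint_new e he x hxf hxe
  · exact hM.2 e he f hf hne x hxe hxf

theorem IsSemistrongMatching.subset (hN : IsSemistrongMatching G N) (hMN : M ⊆ N) :
    IsSemistrongMatching G M := by
  refine ⟨hN.1.subset hMN, fun e he => ?_⟩
  obtain ⟨p, q, rfl, hp⟩ := hN.2 e (hMN he)
  exact ⟨p, q, rfl, OnlyNeighborIn.mono hp hMN⟩

theorem isSemistrongMatching_empty (G : SimpleGraph V) : IsSemistrongMatching G ∅ := by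
  simp [IsSemistrongMatching, IsMatchingSet]

theorem IsMatchingSet.isSemistrongMatching_insert (hM : IsMatchingSet G M) (huv : G.Adj u v)
    (hu : u ∉ edgeVerts M) (hv : v ∉ edgeVerts M) (hu_free : ∀ w ∈ edgeVerts M, ¬ G.Adj u w)
    (hleaf : ∀ e ∈ M, ∃ p q, e = s(p, q) ∧ ¬ G.Adj v p ∧ OnlyNeighborIn G M p q) :
    IsSemistrongMatching G (insert s(u, v) M) := by
  refine ⟨hM.insert_edge huv hu hv, ?_⟩
  rintro e (rfl | he)
  · refine ⟨u, v, rfl, fun w hw huw => ?_⟩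
    rcases mem_edgeVerts_insert.1 hw with rfl | rfl | hw
    · exact absurd huw G.irrefl
    · rfl
    · exact absurd huw (hu_free w hw)
  · obtain ⟨p, q, rfl, hvp, hp⟩ := hleaf e he
    refine ⟨p, q, rfl, fun w hw hpw => ?_⟩
    rcases mem_edgeVerts_insert.1 hw with rfl | rfl | hw
    · exact absurd hpw.symm (hu_free p (left_mem_edgeVerts he))
    · exact absurd hpw.symm hvp
    · exact hp w hw hpw

theorem IsSemistrongMatching.insert_of_forall_not_adj (hM : IsSemistrongMatching G M)
    (huv : G.Adj u v) (hu : u ∉ edgeVerts M) (hv : v ∉ edgeVerts M)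
    (hu_free : ∀ w ∈ edgeVerts M, ¬ G.Adj u w) (hv_free : ∀ w ∈ edgeVerts M, ¬ G.Adj v w) :
    IsSemistrongMatching G (insert s(u, v) M) := by
  refine hM.1.isSemistrongMatching_insert huv hu hv hu_free fun e he => ?_
  obtain ⟨p, q, rfl, hp⟩ := hM.2 e he
  exact ⟨p, q, rfl, hv_free p (left_mem_edgeVerts he), hp⟩

theorem IsSemistrongMatching.insert_of_onlyNeighborIn (hM : IsSemistrongMatching G M)
    (huv : G.Adj u v) (hu : u ∉ edgeVerts M) (hv : v ∉ edgeVerts M)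
    (hu_free : ∀ w ∈ edgeVerts M, ¬ G.Adj u w) (hvb : OnlyNeighborIn G M v b)
    (hby : s(b, y) ∈ M) (hyb : OnlyNeighborIn G M y b) :
    IsSemistrongMatching G (insert s(u, v) M) := by
  refine hM.1.isSemistrongMatching_insert huv hu hv hu_free fun e he => ?_
  by_cases heby : e = s(b, y)
  · have hby_ne : b ≠ y := G.ne_of_adj (hM.1.1 hby)
    exact ⟨y, b, heby.trans Sym2.eq_swap,
      fun hvy => hby_ne (hvb y (right_mem_edgeVerts hby) hvy).symm, hyb⟩
  · obtain ⟨p, q, rfl, hp⟩ := hM.2 e he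
    refine ⟨p, q, rfl, fun hvp => heby ?_, hp⟩
    obtain rfl := hvb p (left_mem_edgeVerts he) hvp
    exact hM.1.eq_of_mem he hby (Sym2.mem_mk_left _ _) (Sym2.mem_mk_left _ _)

theorem IsMatchingSet.not_adj_of_onlyNeighborIn (hM : IsMatchingSet G M)
    (hvb : OnlyNeighborIn G M v b) (hf : f ∈ M) (hbf : b ∈ f) :
    ∀ w ∈ edgeVerts (M \ {f}), ¬ G.Adj v w := by
  rintro w ⟨g, ⟨hg, hgf⟩, hwg⟩ hvw
  obtain rfl := hvb w ⟨g, hg, hwg⟩ hvw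
  exact hgf (hM.eq_of_mem hg hf hwg hbf)

end Matching

/-- A partial edge-coloring with colors `0, …, k - 1` whose color classes are semistrong matchings.
Edges with a value `≥ k` count as uncolored. -/
def IsPartialSemistrongColoring (G : SimpleGraph V) (k : ℕ) (c : Sym2 V → ℕ) : Prop :=
  ∀ i < k, IsSemistrongMatching G (colorClass G c i)

/-- The uncolored edges of a partial edge-coloring with colors `0, …, k - 1`. -/
def uncoloredEdges (G : SimpleGraph V) (k : ℕ) (c : Sym2 V → ℕ) : Set (Sym2 V) :=
  {e | e ∈ G.edgeSet ∧ k ≤ c e}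

/-- The ordered pairs of distinct touching edges with a common color below `k`. -/
def touchingPairs (G : SimpleGraph V) (k : ℕ) (c : Sym2 V → ℕ) : Set (Sym2 V × Sym2 V) :=
  {p | p.1 ≠ p.2 ∧ Touching G p.1 p.2 ∧
    ∃ i < k, p.1 ∈ colorClass G c i ∧ p.2 ∈ colorClass G c i}

/-- The potential of a partial edge-coloring: the number of uncolored edges and, as a tie-breaker,
the number of touching pairs. -/
noncomputable def coloringDefect (G : SimpleGraph V) (k : ℕ) (c : Sym2 V → ℕ) : ℕ ×ₗ ℕ :=
  toLex ((uncoloredEdges G k c).ncard, (touchingPairs G k c).ncard)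

/-- A partial semistrong edge-coloring of least `coloringDefect`. -/
def IsOptimalColoring (G : SimpleGraph V) (k : ℕ) (c : Sym2 V → ℕ) : Prop :=
  MinimalFor (IsPartialSemistrongColoring G k) (coloringDefect G k) c

section Recoloring

open Function (update)

variable {G : SimpleGraph V} {k i α : ℕ} {c : Sym2 V → ℕ} {e f g : Sym2 V}

section Update

variable [DecidableEq (Sym2 V)]

theorem colorClass_update_of_ne (hi : i ≠ α) :
    colorClass G (update c e α) i = colorClass G c i \ {e} := by
  ext x
  by_cases hx : x = e <;> simp [colorClass, hx, hi.symm]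

theorem colorClass_update_self_subset :
    colorClass G (update c e α) α ⊆ insert e (colorClass G c α) := by
  intro x hx
  by_cases hxe : x = e
  · exact Or.inl hxe
  · simpa [colorClass, hxe] using hx

theorem uncoloredEdges_update_of_lt (hα : α < k) :
    uncoloredEdges G k (update c e α) = uncoloredEdges G k c \ {e} := by
  ext x
  by_cases hx : x = e <;> simp [uncoloredEdges, hx, hα]

theorem uncoloredEdges_update_of_le (he : e ∈ G.edgeSet) (hα : k ≤ α) :
    uncoloredEdges G k (update c e α) = insert e (uncoloredEdges G k c) := by
  ext x
  by_cases hx : x = e <;> simp [uncoloredEdges, hx, he, hα]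

theorem IsPartialSemistrongColoring.recolor (hc : IsPartialSemistrongColoring G k c)
    (hs : IsSemistrongMatching G (insert e (colorClass G c α))) :
    IsPartialSemistrongColoring G k (update c e α) := by
  intro i hi
  rcases eq_or_ne i α with rfl | hiα
  · exact hs.subset colorClass_update_self_subset
  · rw [colorClass_update_of_ne hiα]
    exact (hc i hi).subset Set.sdiff_subset

theorem IsPartialSemistrongColoring.uncolor (hc : IsPartialSemistrongColoring G k c)
    (e : Sym2 V) : IsPartialSemistrongColoring G k (update c e k) := by
  intro i hi
  rw [colorClass_update_of_ne hi.ne]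
  exact (hc i hi).subset Set.sdiff_subset

theorem touchingPairs_update_subset (he : ∀ g ∈ colorClass G c α, ¬ Touching G e g) :
    touchingPairs G k (update c e α) ⊆ touchingPairs G k c := by
  rintro ⟨x, y⟩ ⟨hne, hxy, i, hi, hx, hy⟩
  refine ⟨hne, hxy, i, hi, ?_⟩
  rcases eq_or_ne i α with rfl | hiα
  · rcases colorClass_update_self_subset hx with hxe | hx <;>
      rcases colorClass_update_self_subset hy with hye | hy
    · exact absurd (hxe.trans hye.symm) hne
    · exact absurd (hxe ▸ hxy) (he y hy)
    · exact absurd (hye ▸ hxy.symm) (he x hx)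
    · exact ⟨hx, hy⟩
  · rw [colorClass_update_of_ne hiα] at hx hy
    exact ⟨hx.1, hy.1⟩

theorem touchingPairs_uncolor_ssubset (hα : α < k) (hf : f ∈ colorClass G c α)
    (hg : g ∈ colorClass G c α) (hfg : f ≠ g) (htouch : Touching G f g) :
    touchingPairs G k (update c f k) ⊂ touchingPairs G k c := by
  refine (Set.ssubset_iff_of_subset ?_).2 ⟨(f, g), ⟨hfg, htouch, α, hα, hf, hg⟩, ?_⟩
  · rintro p ⟨hne, hp, i, hi, hp₁, hp₂⟩
    rw [colorClass_update_of_ne hi.ne] at hp₁ hp₂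
    exact ⟨hne, hp, i, hi, hp₁.1, hp₂.1⟩
  · rintro ⟨-, -, i, hi, hfi, -⟩
    rw [colorClass_update_of_ne hi.ne] at hfi
    exact hfi.2 rfl

end Update

theorem IsPartialSemistrongColoring.hasSemistrongEdgeColoring
    (hc : IsPartialSemistrongColoring G k c) (hlt : ∀ e ∈ G.edgeSet, c e < k) :
    HasSemistrongEdgeColoring G k := by
  refine ⟨c, hlt, fun i => ?_⟩
  by_cases hi : i < k
  · exact hc i hi
  · convert isSemistrongMatching_empty G
    exact Set.eq_empty_of_forall_notMem fun e he => hi (he.2 ▸ hlt e he.1)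

theorem exists_isOptimalColoring (G : SimpleGraph V) (k : ℕ) : ∃ c, IsOptimalColoring G k c := by
  refine exists_minimalFor_of_wellFoundedLT _ _ ⟨fun _ => k, fun i hi => ?_⟩
  convert isSemistrongMatching_empty G
  exact Set.eq_empty_of_forall_notMem fun e he => hi.ne' he.2

variable [Finite V]

theorem IsOptimalColoring.not_isSemistrongMatching_insert (hc : IsOptimalColoring G k c)
    (he : e ∈ uncoloredEdges G k c) (hα : α < k) :
    ¬ IsSemistrongMatching G (insert e (colorClass G c α)) := by
  classical
  intro hs
  refine hc.not_lt (hc.prop.recolor hs) (Prod.Lex.toLex_lt_toLex.2 (Or.inl ?_))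
  rw [uncoloredEdges_update_of_lt hα]
  exact Set.ncard_sdiff_singleton_lt_of_mem he

theorem IsOptimalColoring.not_touching_of_exchange (hc : IsOptimalColoring G k c)
    (he : e ∈ uncoloredEdges G k c) (hα : α < k) (hf : f ∈ colorClass G c α)
    (he_free : ∀ g ∈ colorClass G c α \ {f}, ¬ Touching G e g)
    (hs : IsSemistrongMatching G (insert e (colorClass G c α \ {f}))) :
    ∀ g ∈ colorClass G c α, f ≠ g → ¬ Touching G f g := by
  classical
  intro g hg hfg htouch
  have hclass : colorClass G (update c f k) α = colorClass G c α \ {f} :=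
    colorClass_update_of_ne hα.ne
  rw [← hclass] at he_free hs
  refine hc.not_lt ((hc.prop.uncolor f).recolor hs)
    (Prod.Lex.toLex_lt_toLex.2 (Or.inr ⟨?_, Set.ncard_lt_ncard ?_⟩))
  · have hf_colored : f ∉ uncoloredEdges G k c := fun h => (hf.2 ▸ hα).not_ge h.2
    rw [uncoloredEdges_update_of_lt hα, uncoloredEdges_update_of_le hf.1 le_rfl]
    exact Set.ncard_exchange' hf_colored he
  · exact (touchingPairs_update_subset he_free).trans_ssubset
      (touchingPairs_uncolor_ssubset hα hf hg hfg htouch)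

theorem IsOptimalColoring.onlyNeighborIn_of_onlyNeighborIn {u v b y : V}
    (hc : IsOptimalColoring G k c) (he : s(u, v) ∈ uncoloredEdges G k c) (hα : α < k)
    (hu : u ∉ edgeVerts (colorClass G c α)) (hv : v ∉ edgeVerts (colorClass G c α))
    (hu_free : ∀ w ∈ edgeVerts (colorClass G c α), ¬ G.Adj u w)
    (hvb : OnlyNeighborIn G (colorClass G c α) v b) (hby : s(b, y) ∈ colorClass G c α) :
    OnlyNeighborIn G (colorClass G c α) y b := by
  rintro w ⟨g, hg, hwg⟩ hyw
  by_contra hwb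
  have hM := hc.prop α hα
  have hsub := edgeVerts_mono (Set.sdiff_subset : colorClass G c α \ {s(b, y)} ⊆ _)
  have hu_free' := fun w hw => hu_free w (hsub hw)
  have hv_free := hM.1.not_adj_of_onlyNeighborIn hvb hby (Sym2.mem_mk_left b y)
  have huv_free : ∀ g ∈ colorClass G c α \ {s(b, y)}, ¬ Touching G s(u, v) g := by
    rintro g hg ⟨a, ha, x, hx, hax⟩
    rcases Sym2.mem_iff.1 ha with rfl | rfl
    · exact hu_free' x ⟨g, hg, hx⟩ hax
    · exact hv_free x ⟨g, hg, hx⟩ hax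
  have hby_ne : s(b, y) ≠ g := by
    rintro rfl
    exact (Sym2.mem_iff.1 hwg).elim hwb hyw.ne'
  exact hc.not_touching_of_exchange he hα hby huv_free
    ((hM.subset Set.sdiff_subset).insert_of_forall_not_adj he.1 (fun h => hu (hsub h))
      (fun h => hv (hsub h)) hu_free' hv_free)
    g hg hby_ne ⟨y, Sym2.mem_mk_right b y, w, hwg, hyw⟩

theorem IsOptimalColoring.exists_adj_not_onlyNeighborIn {u v : V}
    (hc : IsOptimalColoring G k c) (he : s(u, v) ∈ uncoloredEdges G k c) (hα : α < k)
    (hu : u ∉ edgeVerts (colorClass G c α)) (hv : v ∉ edgeVerts (colorClass G c α))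
    (hu_free : ∀ w ∈ edgeVerts (colorClass G c α), ¬ G.Adj u w) :
    ∃ b ∈ edgeVerts (colorClass G c α),
      G.Adj v b ∧ ¬ OnlyNeighborIn G (colorClass G c α) v b := by
  have hM := hc.prop α hα
  have hmaximal := hc.not_isSemistrongMatching_insert he hα
  by_contra! hv_only
  by_cases hv_free : ∀ w ∈ edgeVerts (colorClass G c α), ¬ G.Adj v w
  · exact hmaximal (hM.insert_of_forall_not_adj he.1 hu hv hu_free hv_free)
  · push Not at hv_free
    obtain ⟨b, hb, hvb⟩ := hv_free
    obtain ⟨y, hby⟩ := exists_mk_mem_of_mem_edgeVerts hb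
    have hyb := hc.onlyNeighborIn_of_onlyNeighborIn he hα hu hv hu_free (hv_only b hb hvb) hby
    exact hmaximal
      (hM.insert_of_onlyNeighborIn he.1 hu hv hu_free (hv_only b hb hvb) hby hyb)

end Recoloring

section Counting

open Finset

variable [Fintype V] {G : SimpleGraph V} [DecidableRel G.Adj] {c : Sym2 V → ℕ} {k α : ℕ}
  {u v : V}

open scoped Classical in
theorem card_filter_mem_edgeVerts_colorClass_le_degree (S : Finset ℕ) (w : V) :
    #{α ∈ S | w ∈ edgeVerts (colorClass G c α)} ≤ G.degree w := by
  rw [← G.card_neighborFinset_eq_degree w]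
  refine (card_le_card fun α hα => ?_).trans (card_image_le (f := fun z => c s(w, z)))
  obtain ⟨z, hwz, hcz⟩ := exists_mk_mem_of_mem_edgeVerts (mem_filter.1 hα).2
  exact mem_image.2 ⟨z, (G.mem_neighborFinset w z).2 hwz, hcz⟩

variable [DecidableEq V]

open scoped Classical in
/-- The charge of the color `α` at `u`, where `v` is a neighbor of `u` that is left out: the number
of neighbors of `u` covered by `α`, those joined to `u` by an edge of color `α` counted twice. -/
noncomputable def colorCharge (G : SimpleGraph V) [DecidableRel G.Adj] (c : Sym2 V → ℕ) (α : ℕ)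
    (u v : V) : ℕ :=
  #{w ∈ (G.neighborFinset u).erase v | w ∈ edgeVerts (colorClass G c α)} +
    #{w ∈ (G.neighborFinset u).erase v | c s(u, w) = α}

theorem sum_colorCharge_le (S : Finset ℕ) :
    ∑ α ∈ S, colorCharge G c α u v ≤ ∑ w ∈ (G.neighborFinset u).erase v, (G.degree w + 1) := by
  classical
  simp only [colorCharge, sum_add_distrib]
  gcongr ?_ + ?_
  · simp only [card_filter]
    rw [sum_comm]
    simp only [← card_filter]
    exact sum_le_sum fun w _ => card_filter_mem_edgeVerts_colorClass_le_degree S w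
  · simp only [card_filter]
    rw [sum_comm]
    exact sum_le_sum fun w _ => by rw [sum_ite_eq]; split <;> simp

theorem not_adj_of_colorCharge_eq_zero (hv : v ∉ edgeVerts (colorClass G c α))
    (h : colorCharge G c α u v = 0) : ∀ w ∈ edgeVerts (colorClass G c α), ¬ G.Adj u w := by
  classical
  intro w hw huw
  have hwv : w ≠ v := fun hwv => hv (hwv ▸ hw)
  have hempty := card_eq_zero.1 (Nat.add_eq_zero_iff.1 h).1
  exact filter_eq_empty_iff.1 hempty (by simp [hwv, huw]) hw

theorem notMem_edgeVerts_of_colorCharge_le_one (huv : c s(u, v) ≠ α)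
    (h : colorCharge G c α u v ≤ 1) : u ∉ edgeVerts (colorClass G c α) := by
  classical
  intro hu
  obtain ⟨z, huz⟩ := exists_mk_mem_of_mem_edgeVerts hu
  have hzv : z ≠ v := fun hzv => huv (hzv ▸ huz.2)
  have hz : z ∈ (G.neighborFinset u).erase v := by simpa [hzv] using huz.1
  have hcovered : 0 < #{w ∈ (G.neighborFinset u).erase v | w ∈ edgeVerts (colorClass G c α)} :=
    card_pos.2 ⟨z, mem_filter.2 ⟨hz, right_mem_edgeVerts huz⟩⟩
  have hcolored : 0 < #{w ∈ (G.neighborFinset u).erase v | c s(u, w) = α} :=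
    card_pos.2 ⟨z, mem_filter.2 ⟨hz, huz.2⟩⟩
  rw [colorCharge] at h
  omega

theorem onlyNeighborIn_of_colorCharge_le_one {b : V} (hv : v ∉ edgeVerts (colorClass G c α))
    (h : colorCharge G c α u v ≤ 1) (hb : b ∈ edgeVerts (colorClass G c α)) (hub : G.Adj u b) :
    OnlyNeighborIn G (colorClass G c α) u b := by
  classical
  intro w hw huw
  have mem_covered : ∀ z ∈ edgeVerts (colorClass G c α), G.Adj u z →
      z ∈ ({w ∈ (G.neighborFinset u).erase v | w ∈ edgeVerts (colorClass G c α)} : Finset V) := by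
    intro z hz huz
    have hzv : z ≠ v := fun hzv => hv (hzv ▸ hz)
    simp [hzv, huz, hz]
  exact card_le_one.1 ((Nat.le_add_right _ _).trans h) w (mem_covered w hw huw) b
    (mem_covered b hb hub)

theorem IsOptimalColoring.two_le_colorCharge_of_eq_zero (hc : IsOptimalColoring G k c)
    (he : s(u, v) ∈ uncoloredEdges G k c) (hα : α < k) (h : colorCharge G c α u v = 0) :
    2 ≤ colorCharge G c α v u := by
  by_contra! hlt
  have hle := Nat.le_of_lt_succ hlt
  have huv : c s(u, v) ≠ α := (hα.trans_le he.2).ne'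
  have hu := notMem_edgeVerts_of_colorCharge_le_one huv (h.le.trans zero_le_one)
  have hv := notMem_edgeVerts_of_colorCharge_le_one (Sym2.eq_swap (a := u) ▸ huv) hle
  obtain ⟨b, hb, hvb, hnot⟩ :=
    hc.exists_adj_not_onlyNeighborIn he hα hu hv (not_adj_of_colorCharge_eq_zero hv h)
  exact hnot (onlyNeighborIn_of_colorCharge_le_one hu hle hb hvb)

theorem IsOptimalColoring.two_le_colorCharge_add (hc : IsOptimalColoring G k c)
    (he : s(u, v) ∈ uncoloredEdges G k c) (hα : α < k) :
    2 ≤ colorCharge G c α u v + colorCharge G c α v u := by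
  have hu := hc.two_le_colorCharge_of_eq_zero he hα
  have hv := hc.two_le_colorCharge_of_eq_zero (Sym2.eq_swap (a := u) ▸ he) hα
  omega

theorem IsOptimalColoring.two_mul_le_sum_degree (hc : IsOptimalColoring G k c)
    (he : s(u, v) ∈ uncoloredEdges G k c) :
    2 * k ≤ ∑ w ∈ (G.neighborFinset u).erase v, (G.degree w + 1) +
      ∑ w ∈ (G.neighborFinset v).erase u, (G.degree w + 1) :=
  calc
    2 * k = ∑ _α ∈ range k, 2 := by simp [mul_comm]
    _ ≤ ∑ α ∈ range k, (colorCharge G c α u v + colorCharge G c α v u) :=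
      sum_le_sum fun _ hα => hc.two_le_colorCharge_add he (mem_range.1 hα)
    _ ≤ _ := by
      rw [sum_add_distrib]
      exact add_le_add (sum_colorCharge_le _) (sum_colorCharge_le _)

theorem sum_erase_neighborFinset_degree_add_one_le (huv : G.Adj u v) :
    ∑ w ∈ (G.neighborFinset u).erase v, (G.degree w + 1) ≤
      (G.degree u - 1) * (G.maxDegree + 1) := by
  have hcard : #((G.neighborFinset u).erase v) = G.degree u - 1 := by
    rw [card_erase_of_mem (by simpa using huv), card_neighborFinset_eq_degree]
  rw [← hcard]
  exact sum_le_card_nsmul _ _ _ fun w _ => Nat.succ_le_succ (G.degree_le_maxDegree w)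

theorem sum_degree_lt_of_not_both_maxDegree (huv : G.Adj u v)
    (h : ¬ (G.degree u = G.maxDegree ∧ G.degree v = G.maxDegree)) :
    ∑ w ∈ (G.neighborFinset u).erase v, (G.degree w + 1) +
      ∑ w ∈ (G.neighborFinset v).erase u, (G.degree w + 1) < 2 * (G.maxDegree ^ 2 - 1) := by
  have hu := G.degree_le_maxDegree u
  have hv := G.degree_le_maxDegree v
  have hu_pos : 0 < G.degree u := (G.degree_pos_iff_exists_adj u).2 ⟨v, huv⟩
  have hv_pos : 0 < G.degree v := (G.degree_pos_iff_exists_adj v).2 ⟨u, huv.symm⟩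
  have hsum : (G.degree u - 1) + (G.degree v - 1) < 2 * (G.maxDegree - 1) := by omega
  calc
    _ ≤ (G.degree u - 1) * (G.maxDegree + 1) + (G.degree v - 1) * (G.maxDegree + 1) :=
      add_le_add (sum_erase_neighborFinset_degree_add_one_le huv)
        (sum_erase_neighborFinset_degree_add_one_le huv.symm)
    _ = ((G.degree u - 1) + (G.degree v - 1)) * (G.maxDegree + 1) := (add_mul _ _ _).symm
    _ < 2 * (G.maxDegree - 1) * (G.maxDegree + 1) :=
      Nat.mul_lt_mul_of_pos_right hsum (Nat.succ_pos _)
    _ = 2 * (G.maxDegree ^ 2 - 1) := by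
      rw [← one_pow 2, Nat.sq_sub_sq, one_pow]
      ring

end Counting

theorem ssChromIdx_le_maxDegree_sq_sub_one_general {V : Type*} [Fintype V] [DecidableEq V]
    (G : SimpleGraph V) [DecidableRel G.Adj] (k : ℕ)
    (hk : ∀ u v : V, G.Adj u v →
      ∑ w ∈ (G.neighborFinset u).erase v, (G.degree w + 1) +
        ∑ w ∈ (G.neighborFinset v).erase u, (G.degree w + 1) < 2 * k) :
    ssChromIdx G ≤ k := by
  obtain ⟨c, hc⟩ := exists_isOptimalColoring G k
  refine Nat.sInf_le (hc.prop.hasSemistrongEdgeColoring fun e he => ?_)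
  induction e using Sym2.ind with
  | _ u v =>
    by_contra! huncolored
    exact (hk u v he).not_ge (hc.two_mul_le_sum_degree ⟨he, huncolored⟩)

/-- If no edge of a finite simple graph `G` has both of its endvertices of
degree `Δ(G)`, then the semistrong chromatic index of `G` is at most `Δ(G)^2 - 1`. -/
theorem ssChromIdx_le_maxDegree_sq_sub_one {V : Type*} [Fintype V] [DecidableEq V]
    (G : SimpleGraph V) [DecidableRel G.Adj]
    (h : ∀ u v : V, G.Adj u v →
      ¬ (G.degree u = G.maxDegree ∧ G.degree v = G.maxDegree)) :
    ssChromIdx G ≤ G.maxDegree ^ 2 - 1 := by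
  exact ssChromIdx_le_maxDegree_sq_sub_one_general G _ fun u v huv =>
    sum_degree_lt_of_not_both_maxDegree huv (h u v huv)
end
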